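/- Let G = G₂ × H × H, where G₂ is an admissible finite abelian 2-group of square order and H is a finite abelian group of odd order. Then lim_{n → ∞} η₁(G^n) / |G|^{n/2} = 1. Moreover, for each integer g ≥ 1, the limit lim_{n → ∞} η_g(G^n) / (√g · |G|^{n/2}) exists. -/

import Mathlib

/-!
The lower bound `η₁(G)² ≥ |G|` is immediate from counting pairs, so everything rests on
constructions. Call `G` *good* if `η₁(Gⁿ) = (1 + o(1)) |G|^{n/2}`.

*Extensions.* If `G` is an extension of `Q` by `K`, adding a `g`-basis of `K` to a lifted `1`-basis
of `Q` gives `η_g(G) ≤ η_g(K) η₁(Q)` (`etaMin_ext`). Taking powers of the extension, `G` is good as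
soon as `K` and `Q` are (`Good.ext`).

*Two kinds of building blocks.* Let `F` be the field with `pⁿ` elements. For odd `p` the parabola
`{(x, x²)}` represents every element of `F × F ≅ (ℤ/p × ℤ/p)ⁿ` outside `{0} × F`. For `p = 2` twist
the addition of `F × F` by the cocycle `(x, y) ↦ x y`. The resulting group is `(ℤ/4)ⁿ`, and the set
`{(x, 0)}` represents everything outside `{0} × F`. The remaining subgroup, of order `pⁿ`, has a
basis of size `O(p^{⌈n/2⌉})`, namely the union of two complementary subspaces. Hence `ℤ/p × ℤ/p`
(`p` odd) and `ℤ/4` are good.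

*Assembly.* For `H` of odd order, a composition series of `H` shows that `H × H` is good. For the
2-part, `ℤ/2 × ℤ/8` is an extension of `ℤ/4` by `ℤ/4`, and `∏ ℤ/2^{dᵢ + eᵢ}` is an extension of
`∏ ℤ/2^{eᵢ}` by `∏ ℤ/2^{dᵢ}`. So the exponent vectors of good groups form an additive monoid
containing all `2 δᵢ` and `δᵢ + 3 δⱼ` with `i ≠ j`, and admissible vectors of even sum lie in the
monoid generated by these (`good_of_wt`).

*All `g`.* From `η_g(G^{m+n}) ≤ η_g(G^m) η₁(Gⁿ)` and goodness of `G`, the normalised sequence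
converges to its infimum over the `m` for which `g`-bases of `G^m` are known to exist
(`exists_limit`).
-/


open Filter Topology

/-- `B` is a `g`-difference basis for the additive group `G`: every `x ∈ G` has at least `g`
representations `x = b₁ - b₂` with ordered pairs `(b₁, b₂) ∈ B × B`. -/
def IsDiffBasis {G : Type*} [AddCommGroup G] (g : ℕ) (B : Set G) : Prop :=
  ∀ x : G, g ≤ Nat.card {p : G × G // p.1 ∈ B ∧ p.2 ∈ B ∧ p.1 - p.2 = x}

/-- `η_g(G)`: the minimum size of a `g`-difference basis for `G`. -/
noncomputable def etaMin (G : Type*) [AddCommGroup G] (g : ℕ) : ℕ :=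
  sInf {k : ℕ | ∃ B : Set G, B.Finite ∧ IsDiffBasis g B ∧ Nat.card B = k}

/-- `G` is an admissible finite abelian 2-group: it is isomorphic to
`∏_{i=1}^t Z_{2^{2s_i}}^{u_i} × ∏_{j=1}^w Z_{2^{2r_j+1}}^{v_j} × Z_2^v` with
`t, w, v ≥ 0`, `u_i, v_j ≥ 1`, `1 ≤ s_1 < ⋯ < s_t`, `1 ≤ r_1 < ⋯ < r_w`, and
`2⌊(Σ_{i with s_i ∉ {1,2}} u_i)/2⌋ + Σ_j v_j ≥ v`. -/
def IsAdmissibleTwoGroup (G : Type*) [AddCommGroup G] : Prop :=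
  ∃ (t w v : ℕ) (s u : Fin t → ℕ) (r vv : Fin w → ℕ),
    StrictMono s ∧ (∀ i, 1 ≤ s i) ∧ (∀ i, 1 ≤ u i) ∧
    StrictMono r ∧ (∀ j, 1 ≤ r j) ∧ (∀ j, 1 ≤ vv j) ∧
    Nonempty (G ≃+ ((∀ i : Fin t, Fin (u i) → ZMod (2 ^ (2 * s i))) ×
      (∀ j : Fin w, Fin (vv j) → ZMod (2 ^ (2 * r j + 1))) ×
      (Fin v → ZMod 2))) ∧
    v ≤ 2 * ((∑ i ∈ Finset.univ.filter (fun i : Fin t => s i ≠ 1 ∧ s i ≠ 2), u i) / 2)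
        + ∑ j, vv j


/-! ### Difference bases and extensions -/

lemma etaMin_le {G : Type*} [AddCommGroup G] [Finite G] {g : ℕ} {B : Set G}
    (h : IsDiffBasis g B) : etaMin G g ≤ Nat.card B :=
  Nat.sInf_le ⟨B, B.toFinite, h, rfl⟩

lemma exists_isDiffBasis {G : Type*} [AddCommGroup G] [Finite G] {g : ℕ}
    (hg : g ≤ Nat.card G) : ∃ B : Set G, IsDiffBasis g B ∧ Nat.card B = etaMin G g := by
  have : etaMin G g ∈ {k : ℕ | ∃ B : Set G, B.Finite ∧ IsDiffBasis g B ∧ Nat.card B = k} := by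
    refine Nat.sInf_mem ⟨_, Set.univ, Set.toFinite _, fun x => hg.trans ?_, rfl⟩
    refine Nat.card_le_card_of_injective (fun y => ⟨(x + y, y), by simp⟩) fun a b hab => ?_
    simpa using hab
  obtain ⟨B, -, h1, h2⟩ := this
  exact ⟨B, h1, h2⟩

lemma isDiffBasis_one_iff {G : Type*} [AddCommGroup G] [Finite G] {B : Set G} :
    IsDiffBasis 1 B ↔ ∀ x, ∃ a ∈ B, ∃ b ∈ B, a - b = x := by
  refine forall_congr' fun x => ?_
  rw [Nat.one_le_iff_ne_zero, ← Nat.pos_iff_ne_zero, Nat.card_pos_iff]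
  constructor
  · rintro ⟨⟨⟨⟨a, b⟩, ha, hb, h⟩⟩, -⟩
    exact ⟨a, ha, b, hb, h⟩
  · rintro ⟨a, ha, b, hb, h⟩
    exact ⟨⟨⟨(a, b), ha, hb, h⟩⟩, inferInstance⟩

/-- Counting pairs gives the trivial lower bound. -/
lemma card_le_etaMin_sq (G : Type*) [AddCommGroup G] [Finite G] :
    Nat.card G ≤ etaMin G 1 ^ 2 := by
  obtain ⟨B, hB, hc⟩ := exists_isDiffBasis (G := G) (g := 1) Nat.card_pos
  rw [← hc, sq, ← Nat.card_prod]
  rw [isDiffBasis_one_iff] at hB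
  refine Nat.card_le_card_of_surjective (fun p : B × B => (p.1 : G) - p.2) fun x => ?_
  obtain ⟨a, ha, b, hb, h⟩ := hB x
  exact ⟨(⟨a, ha⟩, ⟨b, hb⟩), h⟩

/-- Submultiplicativity along an extension of `Q` by `K`: lift a `1`-basis of `Q` to `G` by a
set-theoretic section and add a `g`-basis of `K`. -/
lemma etaMin_ext {K G Q : Type*} [AddCommGroup K] [AddCommGroup G] [AddCommGroup Q]
    [Finite K] [Finite G] [Finite Q] (i : K →+ G) (f : G →+ Q) (hi : Function.Injective i)
    (hf : Function.Surjective f) (hex : ∀ x, f x = 0 → ∃ k, i k = x) {g : ℕ}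
    (hg : g ≤ Nat.card K) : etaMin G g ≤ etaMin K g * etaMin Q 1 := by
  obtain ⟨A, hA, hAc⟩ := exists_isDiffBasis hg
  obtain ⟨C, hC, hCc⟩ := exists_isDiffBasis (G := Q) (g := 1) Nat.card_pos
  rw [isDiffBasis_one_iff] at hC
  choose s hs using hf
  let φ : A × C → G := fun p => i p.1 + s p.2
  have hB : IsDiffBasis g (Set.range φ) := by
    intro x
    obtain ⟨a, ha, b, hb, hab⟩ := hC (f x)
    obtain ⟨k, hk⟩ := hex (x - (s a - s b)) (by simp [hs, hab])
    refine (hA k).trans (Nat.card_le_card_of_injective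
      (fun p => ⟨(i p.1.1 + s a, i p.1.2 + s b), ⟨(⟨_, p.2.1⟩, ⟨a, ha⟩), rfl⟩,
        ⟨(⟨_, p.2.2.1⟩, ⟨b, hb⟩), rfl⟩, ?_⟩) ?_)
    · have := p.2.2.2
      have h2 : i p.1.1 - i p.1.2 = x - (s a - s b) := by rw [← map_sub, this, hk]
      calc i p.1.1 + s a - (i p.1.2 + s b) = (i p.1.1 - i p.1.2) + (s a - s b) := by abel
        _ = x := by rw [h2]; abel
    · rintro ⟨⟨a1, b1⟩, h1⟩ ⟨⟨a2, b2⟩, h2⟩ h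
      simp only [Subtype.mk.injEq, Prod.mk.injEq, add_left_inj] at h
      simp [hi h.1, hi h.2]
  refine (etaMin_le hB).trans ?_
  rw [← hAc, ← hCc, ← Nat.card_prod]
  exact Nat.card_le_card_of_surjective _ Set.rangeFactorization_surjective

/-- If the differences of `s` cover everything outside the image of `K`, it remains to add a
`1`-basis of `K`. -/
lemma etaMin_le_card_add {K G Q : Type*} [AddCommGroup K] [AddCommGroup G] [Finite K] [Finite G]
    [Finite Q] (i : K →+ G) (s : Q → G)
    (h : ∀ x, (∃ a b, s a - s b = x) ∨ ∃ k, i k = x) :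
    etaMin G 1 ≤ Nat.card Q + etaMin K 1 := by
  obtain ⟨A, hA, hAc⟩ := exists_isDiffBasis (G := K) (g := 1) Nat.card_pos
  rw [isDiffBasis_one_iff] at hA
  have hB : IsDiffBasis 1 (Set.range s ∪ i '' A) := by
    rw [isDiffBasis_one_iff]
    intro x
    obtain ⟨a, b, rfl⟩ | ⟨k, rfl⟩ := h x
    · exact ⟨s a, .inl ⟨a, rfl⟩, s b, .inl ⟨b, rfl⟩, rfl⟩
    · obtain ⟨a, ha, b, hb, rfl⟩ := hA k
      exact ⟨i a, .inr ⟨a, ha, rfl⟩, i b, .inr ⟨b, hb, rfl⟩, by simp⟩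
  refine (etaMin_le hB).trans ?_
  rw [← hAc]
  simp only [Nat.card_coe_set_eq]
  refine (Set.ncard_union_le _ _).trans (add_le_add ?_ (Set.ncard_image_le A.toFinite))
  rw [← Set.image_univ, ← Set.ncard_univ]
  exact Set.ncard_image_le Set.univ.toFinite

/-- The union of the two factors is a `1`-basis of a product. -/
lemma etaMin_prod_le (A C : Type*) [AddCommGroup A] [AddCommGroup C] [Finite A] [Finite C] :
    etaMin (A × C) 1 ≤ Nat.card A + Nat.card C := by
  let s : A ⊕ C → A × C := Sum.elim (fun a => (a, 0)) (fun c => (0, c))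
  have hB : IsDiffBasis 1 (Set.range s) := by
    rw [isDiffBasis_one_iff]
    rintro ⟨a, c⟩
    exact ⟨_, ⟨.inl a, rfl⟩, _, ⟨.inr (-c), rfl⟩, by simp [s]⟩
  refine (etaMin_le hB).trans ?_
  rw [← Nat.card_sum]
  exact Nat.card_le_card_of_surjective _ Set.rangeFactorization_surjective

lemma etaMin_congr_le {G G' : Type*} [AddCommGroup G] [AddCommGroup G'] [Finite G] [Finite G']
    (e : G ≃+ G') : etaMin G' 1 ≤ etaMin G 1 := by
  obtain ⟨A, hA, hAc⟩ := exists_isDiffBasis (G := G) (g := 1) Nat.card_pos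
  rw [isDiffBasis_one_iff] at hA
  have hB : IsDiffBasis 1 (e '' A) := by
    rw [isDiffBasis_one_iff]
    intro x
    obtain ⟨a, ha, b, hb, h⟩ := hA (e.symm x)
    exact ⟨e a, ⟨a, ha, rfl⟩, e b, ⟨b, hb, rfl⟩, by rw [← map_sub, h, e.apply_symm_apply]⟩
  refine (etaMin_le hB).trans ?_
  rw [← hAc, Nat.card_coe_set_eq, Nat.card_coe_set_eq]
  exact Set.ncard_image_le A.toFinite

/-! ### Groups whose powers have asymptotically optimal bases -/

/-- `η₁(Gⁿ) = (1 + o(1)) |G|^{n/2}`. -/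
def Good (G : Type*) [AddCommGroup G] : Prop :=
  Tendsto (fun n : ℕ => (etaMin (Fin n → G) 1 : ℝ) / (Nat.card G : ℝ) ^ ((n : ℝ) / 2)) atTop (𝓝 1)

lemma one_le_ratio (G : Type*) [AddCommGroup G] [Finite G] (n : ℕ) :
    1 ≤ (etaMin (Fin n → G) 1 : ℝ) / (Nat.card G : ℝ) ^ ((n : ℝ) / 2) := by
  have hc : (0 : ℝ) < Nat.card G := by exact_mod_cast Nat.card_pos
  rw [one_le_div (by positivity)]
  have h := card_le_etaMin_sq (Fin n → G)
  rw [Nat.card_fun, Nat.card_fin] at h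
  refine (sq_le_sq₀ (by positivity) (by positivity)).1 ?_
  rw [← Real.rpow_natCast, ← Real.rpow_mul hc.le]
  norm_num
  exact_mod_cast h

/-- By the lower bound, an upper bound on `η₁` suffices. -/
lemma good_of_le {G : Type*} [AddCommGroup G] [Finite G] (b : ℕ → ℝ) (hb : Tendsto b atTop (𝓝 1))
    (h : ∀ᶠ n : ℕ in atTop,
      (etaMin (Fin n → G) 1 : ℝ) / (Nat.card G : ℝ) ^ ((n : ℝ) / 2) ≤ b n) : Good G :=
  tendsto_of_tendsto_of_tendsto_of_le_of_le' tendsto_const_nhds hb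
    (Eventually.of_forall (one_le_ratio G)) h

lemma Good.ext {K G Q : Type*} [AddCommGroup K] [AddCommGroup G] [AddCommGroup Q]
    [Finite K] [Finite G] [Finite Q] (hK : Good K) (hQ : Good Q) (i : K →+ G) (f : G →+ Q)
    (hi : Function.Injective i) (hf : Function.Surjective f) (hex : ∀ x, f x = 0 → ∃ k, i k = x)
    (hcard : Nat.card G = Nat.card K * Nat.card Q) : Good G := by
  have h1 := Tendsto.mul hK hQ
  rw [one_mul] at h1
  refine good_of_le _ h1 (Eventually.of_forall fun n => ?_)
  have hm : etaMin (Fin n → G) 1 ≤ etaMin (Fin n → K) 1 * etaMin (Fin n → Q) 1 := by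
    refine etaMin_ext (i.compLeft (Fin n)) (f.compLeft (Fin n)) hi.comp_left hf.comp_left
      (fun x hx => ?_) Nat.card_pos
    choose k hk using fun j => hex (x j) (congrFun hx j)
    exact ⟨k, funext hk⟩
  rw [div_mul_div_comm, hcard, Nat.cast_mul, Real.mul_rpow (by positivity) (by positivity)]
  gcongr
  exact_mod_cast hm

lemma good_of_subsingleton (G : Type*) [AddCommGroup G] [Subsingleton G] : Good G := by
  refine good_of_le (fun _ => 1) tendsto_const_nhds (Eventually.of_forall fun n => ?_)
  have h : IsDiffBasis 1 (Set.univ : Set (Fin n → G)) := by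
    rw [isDiffBasis_one_iff]
    exact fun x => ⟨x, trivial, 0, trivial, sub_zero x⟩
  have h1 := etaMin_le h
  simp only [Nat.card_unique, Nat.cast_one, Real.one_rpow, div_one] at h1 ⊢
  exact_mod_cast h1

lemma Good.of_bijective {K G : Type*} [AddCommGroup K] [AddCommGroup G] [Finite K] [Finite G]
    (hK : Good K) (i : K →+ G) (hi : Function.Bijective i) : Good G :=
  hK.ext (good_of_subsingleton PUnit.{1}) i (0 : G →+ PUnit.{1}) hi.1 (fun _ => ⟨0, rfl⟩)
    (fun x _ => hi.2 x) (by simp [Nat.card_congr (Equiv.ofBijective i hi)])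

lemma Good.prod {K Q : Type*} [AddCommGroup K] [AddCommGroup Q] [Finite K] [Finite Q]
    (hK : Good K) (hQ : Good Q) : Good (K × Q) :=
  hK.ext hQ (AddMonoidHom.inl K Q) (AddMonoidHom.snd K Q) (fun a b h => by simpa using h)
    Prod.snd_surjective (fun x hx => ⟨x.1, Prod.ext rfl (by simpa using hx.symm)⟩) (Nat.card_prod _ _)

/-! ### The groups `ZMod p × ZMod p` and `ZMod 4` -/

lemma etaMin_field_le (p n : ℕ) [Fact p.Prime] (hn : n ≠ 0) :
    etaMin (GaloisField p n) 1 ≤ p ^ (n / 2) + p ^ (n - n / 2) := by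
  have h := etaMin_prod_le (Fin (n / 2) → ZMod p) (Fin (n - n / 2) → ZMod p)
  simp only [Nat.card_fun, Nat.card_fin, Nat.card_zmod] at h
  have e : ((Fin (n / 2) → ZMod p) × (Fin (n - n / 2) → ZMod p)) ≃ₗ[ZMod p] GaloisField p n :=
    LinearEquiv.ofFinrankEq _ _ (by
      rw [GaloisField.finrank p hn]
      simp
      omega)
  exact (etaMin_congr_le e.toAddEquiv).trans h

lemma good_of_prime_sq {G : Type*} [AddCommGroup G] [Finite G] (p : ℕ) [Fact p.Prime]
    (hc : Nat.card G = p ^ 2)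
    (h : ∀ n ≠ 0, etaMin (Fin n → G) 1 ≤ p ^ n + etaMin (GaloisField p n) 1) : Good G := by
  have hp : (1 : ℝ) < p := by exact_mod_cast (Fact.out : p.Prime).one_lt
  have hlim : Tendsto (fun n : ℕ => 1 + 2 * ((p : ℝ) ^ (n / 2))⁻¹) atTop (𝓝 1) := by
    have h1 : Tendsto (fun n : ℕ => (p : ℝ) ^ (n / 2)) atTop atTop :=
      (tendsto_pow_atTop_atTop_of_one_lt hp).comp
        (Nat.tendsto_div_const_atTop (by norm_num))
    simpa using ((tendsto_inv_atTop_zero.comp h1).const_mul 2).const_add 1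
  refine good_of_le _ hlim ?_
  filter_upwards [eventually_ne_atTop 0] with n hn
  have hpow : (Nat.card G : ℝ) ^ ((n : ℝ) / 2) = (p : ℝ) ^ n := by
    rw [hc, Nat.cast_pow, ← Real.rpow_natCast, ← Real.rpow_mul (by positivity),
      ← Real.rpow_natCast]
    congr 1
    push_cast
    ring
  have h1 : etaMin (Fin n → G) 1 ≤ p ^ n + 2 * p ^ (n - n / 2) := by
    have h2 : p ^ (n / 2) ≤ p ^ (n - n / 2) :=
      Nat.pow_le_pow_right (Fact.out : p.Prime).pos (by omega)
    have := h n hn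
    have := etaMin_field_le p n hn
    omega
  rw [hpow, div_le_iff₀ (by positivity)]
  have h3 : (p : ℝ) ^ n = (p : ℝ) ^ (n / 2) * (p : ℝ) ^ (n - n / 2) := by
    rw [← pow_add]
    congr 1
    omega
  calc (etaMin (Fin n → G) 1 : ℝ) ≤ (p : ℝ) ^ n + 2 * (p : ℝ) ^ (n - n / 2) := by
        exact_mod_cast h1
    _ = (1 + 2 * ((p : ℝ) ^ (n / 2))⁻¹) * (p : ℝ) ^ n := by
        rw [h3]
        field_simp

/-- The parabola `{(x, x²)}` in `F × F` represents each `(d, c)` with `d ≠ 0`, because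
`x ↦ (x + d)² - x²` is a bijection of `F` in odd characteristic. -/
lemma etaMin_field_prod_le (F : Type*) [Field F] [Finite F] (h2 : (2 : F) ≠ 0) :
    etaMin (F × F) 1 ≤ Nat.card F + etaMin F 1 := by
  refine etaMin_le_card_add (AddMonoidHom.inr F F) (fun x : F => (x, x ^ 2)) ?_
  rintro ⟨d, c⟩
  by_cases hd : d = 0
  · exact .inr ⟨c, by rw [hd]; rfl⟩
  · refine .inl ⟨(c / d + d) / 2, (c / d - d) / 2, Prod.ext ?_ ?_⟩
    · change (c / d + d) / 2 - (c / d - d) / 2 = d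
      field_simp
      ring
    · change ((c / d + d) / 2) ^ 2 - ((c / d - d) / 2) ^ 2 = c
      field_simp
      ring

lemma good_zmod_prod (p : ℕ) [Fact p.Prime] (hp : Odd p) : Good (ZMod p × ZMod p) := by
  refine good_of_prime_sq p (by simp [sq]) fun n hn => ?_
  let F := GaloisField p n
  have e : (F × F) ≃ₗ[ZMod p] (Fin n → ZMod p × ZMod p) :=
    LinearEquiv.ofFinrankEq _ _ (by
      rw [Module.finrank_prod, GaloisField.finrank p hn]
      simp [Module.finrank_pi_fintype]
      omega)
  refine (etaMin_congr_le e.toAddEquiv).trans ?_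
  rw [← GaloisField.card p n hn]
  have h2 : (2 : F) ≠ 0 := by
    intro h0
    have := (CharP.cast_eq_zero_iff F p 2).1 (by exact_mod_cast h0)
    have := (Nat.prime_dvd_prime_iff_eq Fact.out Nat.prime_two).1 this
    subst this
    exact absurd hp (by decide)
  exact etaMin_field_prod_le F h2

/-- The set `F × F` with the group law `(x, a) + (y, b) = (x + y, a + b + x y)`, the extension of
`F` by `F` with cocycle the multiplication. -/
@[ext] structure Tw (F : Type*) where
  /-- The image in the quotient. -/
  fst : F
  /-- The coordinate along the subgroup. -/
  snd : F

namespace Tw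
variable {F : Type*} [Field F]

instance : Add (Tw F) := ⟨fun p q => ⟨p.1 + q.1, p.2 + q.2 + p.1 * q.1⟩⟩
instance : Zero (Tw F) := ⟨⟨0, 0⟩⟩
instance : Neg (Tw F) := ⟨fun p => ⟨-p.1, -p.2 + p.1 * p.1⟩⟩
@[simp] lemma fst_add (p q : Tw F) : (p + q).fst = p.fst + q.fst := rfl
@[simp] lemma snd_add (p q : Tw F) : (p + q).snd = p.snd + q.snd + p.fst * q.fst := rfl
@[simp] lemma fst_zero : (0 : Tw F).fst = 0 := rfl
@[simp] lemma snd_zero : (0 : Tw F).snd = 0 := rfl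
@[simp] lemma fst_neg (p : Tw F) : (-p).fst = -p.fst := rfl
@[simp] lemma snd_neg (p : Tw F) : (-p).snd = -p.snd + p.fst * p.fst := rfl

instance : AddCommGroup (Tw F) where
  add_assoc p q r := by ext <;> simp <;> ring
  zero_add p := by ext <;> simp
  add_zero p := by ext <;> simp
  add_comm p q := by ext <;> simp <;> ring
  neg_add_cancel p := by ext <;> simp
  nsmul := nsmulRec
  zsmul := zsmulRec

/-- The underlying pair. -/
def equivProd (F : Type*) : Tw F ≃ F × F :=
  ⟨fun p => (p.1, p.2), fun p => ⟨p.1, p.2⟩, fun _ => rfl, fun _ => rfl⟩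

instance [Finite F] : Finite (Tw F) := Finite.of_equiv _ (equivProd F).symm

/-- The projection to the quotient. -/
def fstHom (F : Type*) [Field F] : Tw F →+ F := ⟨⟨Tw.fst, rfl⟩, fun _ _ => rfl⟩

/-- The inclusion of the subgroup. -/
def inr (F : Type*) [Field F] : F →+ Tw F where
  toFun a := ⟨0, a⟩
  map_zero' := rfl
  map_add' a b := by ext <;> simp

lemma two_nsmul [CharP F 2] (p : Tw F) : 2 • p = ⟨0, p.fst ^ 2⟩ := by
  rw [_root_.two_nsmul]
  ext
  · simp [CharTwo.add_self_eq_zero]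
  · simp [CharTwo.add_self_eq_zero, sq]

lemma four_nsmul [CharP F 2] (p : Tw F) : 4 • p = 0 := by
  rw [show 4 = 2 * 2 from rfl, mul_nsmul, two_nsmul, two_nsmul]
  ext <;> simp

/-- The set `{(x, 0)}` represents each `(d, c)` with `d ≠ 0`. -/
lemma etaMin_le [Finite F] : etaMin (Tw F) 1 ≤ Nat.card F + etaMin F 1 := by
  refine etaMin_le_card_add (inr F) (fun x : F => (⟨x, 0⟩ : Tw F)) ?_
  rintro ⟨d, c⟩
  by_cases hd : d = 0
  · exact .inr ⟨c, by simp [inr, hd]⟩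
  · refine .inl ⟨d - c / d, - c / d, ?_⟩
    rw [sub_eq_iff_eq_add]
    ext
    · simp
      ring
    · simp
      field_simp
      ring

/-- In characteristic `2` the group is free over `ZMod 4`: twice `(x, a)` is `(0, x²)`, so any
elements lifting a basis of `F` over `ZMod 2` generate, and the orders agree. -/
lemma exists_equiv (n : ℕ) (hn : n ≠ 0) :
    Nonempty (Tw (GaloisField 2 n) ≃+ (Fin n → ZMod 4)) := by
  let F := GaloisField 2 n
  let b : Module.Basis (Fin n) (ZMod 2) F :=
    Module.finBasisOfFinrankEq _ _ (GaloisField.finrank 2 hn)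
  let l (i : Fin n) : ZMod 4 →+ Tw F :=
    ZMod.lift 4 ⟨zmultiplesHom (Tw F) ⟨b i, 0⟩, by
      change ((4 : ℕ) : ℤ) • (⟨b i, 0⟩ : Tw F) = 0
      rw [natCast_zsmul]
      exact four_nsmul _⟩
  let ψ : (Fin n → ZMod 4) →+ Tw F := ∑ i, (l i).comp (Pi.evalAddMonoidHom _ i)
  have h1 : ∀ x : F, ∃ c, (ψ c).fst = x := by
    intro x
    refine ⟨fun i => ((b.repr x i).val : ℕ), ?_⟩
    have h2 : ∀ i (k : ℕ), l i k = k • (⟨b i, 0⟩ : Tw F) := by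
      intro i k
      have h3 : l i 1 = ⟨b i, 0⟩ := by
        simpa using ZMod.lift_coe 4 ⟨zmultiplesHom (Tw F) ⟨b i, 0⟩, by
          change ((4 : ℕ) : ℤ) • (⟨b i, 0⟩ : Tw F) = 0
          rw [natCast_zsmul]
          exact four_nsmul _⟩ 1
      rw [← nsmul_one, map_nsmul, h3]
    conv_rhs => rw [← b.sum_repr x]
    change fstHom F _ = _
    simp only [ψ, AddMonoidHom.finsetSum_apply, map_sum, AddMonoidHom.comp_apply,
      Pi.evalAddMonoidHom_apply, h2, map_nsmul]
    refine Finset.sum_congr rfl fun i _ => ?_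
    change (b.repr x i).val • b i = _
    rw [← Nat.cast_smul_eq_nsmul (ZMod 2), ZMod.natCast_zmod_val]
  have hsurj : Function.Surjective ψ := by
    intro y
    obtain ⟨c, hc⟩ := h1 y.fst
    obtain ⟨r, hr⟩ := (bijective_frobenius F 2).2 (y.snd - (ψ c).snd)
    obtain ⟨d, hd⟩ := h1 r
    refine ⟨c + 2 • d, ?_⟩
    rw [frobenius_def] at hr
    rw [map_add, map_nsmul, two_nsmul, hd, hr]
    ext <;> simp [hc]
  have hcard : Nat.card (Fin n → ZMod 4) = Nat.card (Tw F) := by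
    rw [Nat.card_congr (equivProd F), Nat.card_prod, GaloisField.card 2 n hn]
    simp [← mul_pow]
  exact ⟨(AddEquiv.ofBijective ψ
    ((Nat.bijective_iff_surjective_and_card ψ).2 ⟨hsurj, hcard⟩)).symm⟩

end Tw

lemma good_zmod_four : Good (ZMod 4) := by
  refine good_of_prime_sq 2 (by simp) fun n hn => ?_
  obtain ⟨e⟩ := Tw.exists_equiv n hn
  rw [← GaloisField.card 2 n hn]
  exact (etaMin_congr_le e).trans Tw.etaMin_le

/-! ### Groups of odd order -/

/-- Split off a subgroup `ZMod p × ZMod p` and induct on the order. -/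
lemma good_prod_self_aux (m : ℕ) : ∀ (H : Type*) [AddCommGroup H] [Finite H],
    Nat.card H = m → Odd m → Good (H × H) := by
  induction m using Nat.strong_induction_on with
  | _ m ih =>
  intro H _ _ hm hodd
  by_cases h1 : m = 1
  · have : Subsingleton H := (Nat.card_eq_one_iff_unique.1 (hm.trans h1)).1
    exact good_of_subsingleton _
  have hpp := Nat.minFac_prime h1
  set p := m.minFac with hp
  have : Fact p.Prime := ⟨hpp⟩
  have hdvd : p ∣ Nat.card H := hm ▸ Nat.minFac_dvd m
  obtain ⟨x, hx⟩ := exists_prime_addOrderOf_dvd_card' p hdvd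
  let K := AddSubgroup.zmultiples x
  have hKc : Nat.card K = p := by rw [Nat.card_zmultiples, hx]
  have hcard : Nat.card H = Nat.card (H ⧸ K) * Nat.card K := K.card_eq_card_quotient_mul_card_addSubgroup
  have hQodd : Odd (Nat.card (H ⧸ K)) := by
    rw [← hm, hcard, Nat.odd_mul] at hodd
    exact hodd.1
  have hlt : Nat.card (H ⧸ K) < m := by
    rw [← hm, hcard, hKc]
    exact lt_mul_of_one_lt_right Nat.card_pos hpp.one_lt
  have hQ := ih _ hlt (H ⧸ K) rfl hQodd
  let e : ZMod p ≃+ K := zmodAddEquivOfGenerator (g := ⟨x, AddSubgroup.mem_zmultiples x⟩) (by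
    rintro ⟨y, k, hk⟩
    exact ⟨k, Subtype.ext hk⟩) hKc
  let i : ZMod p →+ H := K.subtype.comp e.toAddMonoidHom
  have hi : Function.Injective i := K.subtype_injective.comp e.injective
  have hf : Function.Surjective (QuotientAddGroup.mk' K) := QuotientAddGroup.mk'_surjective K
  have hex : ∀ y, QuotientAddGroup.mk' K y = 0 → ∃ k, i k = y := by
    intro y hy
    have hy' : y ∈ K := (QuotientAddGroup.eq_zero_iff y).1 hy
    exact ⟨e.symm ⟨y, hy'⟩, by simp [i]⟩
  refine (good_zmod_prod p (hodd.of_dvd_nat (Nat.minFac_dvd m))).ext hQ (i.prodMap i)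
    ((QuotientAddGroup.mk' K).prodMap (QuotientAddGroup.mk' K)) (hi.prodMap hi) (hf.prodMap hf)
    ?_ ?_
  · rintro ⟨y, z⟩ hyz
    obtain ⟨a, ha⟩ := hex y (congrArg Prod.fst hyz)
    obtain ⟨b, hb⟩ := hex z (congrArg Prod.snd hyz)
    exact ⟨(a, b), Prod.ext ha hb⟩
  · simp only [Nat.card_prod, hcard, hKc, Nat.card_zmod]
    ring

lemma good_prod_self (H : Type*) [AddCommGroup H] [Finite H] (h : Odd (Nat.card H)) :
    Good (H × H) := good_prod_self_aux _ H rfl h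

/-! ### Admissible 2-groups -/

/-- The group `∏ i, ℤ/2^{e i}`. -/
abbrev TwoGrp {ι : Type*} (e : ι → ℕ) : Type _ := ∀ i, ZMod (2 ^ e i)

section TwoGrp
variable {ι : Type*} [Fintype ι]

lemma card_twoGrp (e : ι → ℕ) : Nat.card (TwoGrp e) = 2 ^ ∑ i, e i := by
  rw [Nat.card_pi, ← Finset.prod_pow_eq_pow_sum]
  simp

/-- `ℤ/2^{d + e}` is an extension of `ℤ/2^e` by `ℤ/2^d`. -/
lemma zmod_exact (d e : ℕ) : ∃ (i : ZMod (2 ^ d) →+ ZMod (2 ^ (d + e)))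
    (f : ZMod (2 ^ (d + e)) →+ ZMod (2 ^ e)), Function.Injective i ∧ Function.Surjective f ∧
    ∀ x, f x = 0 → ∃ k, i k = x := by
  have hz : (zmultiplesHom (ZMod (2 ^ (d + e))) (2 ^ e : ZMod (2 ^ (d + e)))) (2 ^ d : ℕ) = 0 := by
    have h := ZMod.natCast_self (2 ^ (d + e))
    push_cast at h
    rw [zmultiplesHom_apply, natCast_zsmul, nsmul_eq_mul, Nat.cast_pow, Nat.cast_two, ← pow_add]
    exact h
  have hdvd : 2 ^ e ∣ 2 ^ (d + e) := pow_dvd_pow 2 (by omega)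
  have hl : ∀ k : ℤ, ZMod.lift (2 ^ d) ⟨_, hz⟩ (k : ZMod (2 ^ d)) =
      ((k * 2 ^ e : ℤ) : ZMod (2 ^ (d + e))) := by
    intro k
    rw [ZMod.lift_coe]
    simp
  refine ⟨ZMod.lift _ ⟨_, hz⟩, (ZMod.castHom hdvd (ZMod (2 ^ e))).toAddMonoidHom, ?_,
    ZMod.castHom_surjective hdvd, ?_⟩
  · rw [injective_iff_map_eq_zero]
    intro k hk
    obtain ⟨k, rfl⟩ := ZMod.intCast_surjective k
    rw [hl, ZMod.intCast_zmod_eq_zero_iff_dvd] at hk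
    rw [ZMod.intCast_zmod_eq_zero_iff_dvd]
    push_cast at hk ⊢
    rw [pow_add] at hk
    exact Int.dvd_of_mul_dvd_mul_right (by positivity) hk
  · intro x hx
    obtain ⟨x, rfl⟩ := ZMod.intCast_surjective x
    have hx' : ((x : ℤ) : ZMod (2 ^ e)) = 0 := by simpa using hx
    rw [ZMod.intCast_zmod_eq_zero_iff_dvd] at hx'
    obtain ⟨k, rfl⟩ := hx'
    refine ⟨(k : ZMod (2 ^ d)), ?_⟩
    rw [hl]
    push_cast
    ring

lemma good_add {d e : ι → ℕ} (hd : Good (TwoGrp d)) (he : Good (TwoGrp e)) :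
    Good (TwoGrp (d + e)) := by
  choose i f hi hf hex using fun k => zmod_exact (d k) (e k)
  refine hd.ext he (G := TwoGrp (d + e))
    (AddMonoidHom.mk' (fun x k => i k (x k)) fun a b => funext fun k => map_add _ _ _)
    (AddMonoidHom.mk' (fun x k => f k (x k)) fun a b => funext fun k => map_add _ _ _)
    (fun a b h => funext fun k => hi k (congrFun h k))
    (fun y => ?_) (fun x hx => ?_) ?_
  · choose x hx using fun k => hf k (y k)
    exact ⟨x, funext hx⟩
  · choose y hy using fun k => hex k (x k) (congrFun hx k)
    exact ⟨y, funext hy⟩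
  · rw [card_twoGrp, card_twoGrp, card_twoGrp, ← pow_add, ← Finset.sum_add_distrib]
    rfl

lemma good_zero {κ : Type*} : Good (TwoGrp (0 : κ → ℕ)) := by
  have : ∀ i, Subsingleton (ZMod (2 ^ (0 : κ → ℕ) i)) := fun i =>
    inferInstanceAs (Subsingleton (ZMod 1))
  exact good_of_subsingleton _

variable [DecidableEq ι]

lemma good_of_surjective {K G : Type*} [AddCommGroup K] [AddCommGroup G] [Finite K] [Finite G]
    (hK : Good K) (i : K →+ G) (hi : Function.Surjective i) (hc : Nat.card K = Nat.card G) :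
    Good G :=
  hK.of_bijective i ((Nat.bijective_iff_surjective_and_card i).2 ⟨hi, hc⟩)

lemma good_single (i : ι) : Good (TwoGrp (Pi.single i 2 : ι → ℕ)) := by
  have hdvd : ∀ k, 2 ^ (Pi.single i 2 : ι → ℕ) k ∣ 4 := by
    intro k
    by_cases h : k = i
    · subst h; simp
    · simp [h]
  refine good_of_surjective good_zmod_four
    (RingHom.pi fun k => ZMod.castHom (hdvd k) (ZMod (2 ^ (Pi.single i 2 : ι → ℕ) k))).toAddMonoidHom
    (fun y => ?_) (by rw [card_twoGrp]; simp)
  obtain ⟨x, hx⟩ := ZMod.castHom_surjective (hdvd i) (y i)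
  refine ⟨x, funext fun k => ?_⟩
  by_cases h : k = i
  · subst h; exact hx
  · have : Subsingleton (ZMod (2 ^ (Pi.single i 2 : ι → ℕ) k)) := by
      rw [Pi.single_eq_of_ne h]
      exact inferInstanceAs (Subsingleton (ZMod 1))
    exact Subsingleton.elim _ _

/-- `(1, 2)` generates a subgroup of `ℤ/2 × ℤ/8` isomorphic to `ℤ/4`, with quotient `ℤ/4`. -/
lemma good_two_eight : Good (ZMod 2 × ZMod 8) := by
  let i : ZMod 4 →+ ZMod 2 × ZMod 8 := AddMonoidHom.mk' (fun x => (x.val, 2 * x.val)) (by decide)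
  let f : ZMod 2 × ZMod 8 →+ ZMod 4 := AddMonoidHom.mk' (fun x => x.2.val + 2 * x.1.val) (by decide)
  refine good_zmod_four.ext good_zmod_four i f ?_ ?_ ?_ (by simp)
  · change ∀ a b : ZMod 4, (((a.val : ZMod 2), (2 * a.val : ZMod 8)) : ZMod 2 × ZMod 8) =
      ((b.val : ZMod 2), (2 * b.val : ZMod 8)) → a = b
    decide
  · change ∀ b : ZMod 4, ∃ x : ZMod 2 × ZMod 8, (x.2.val + 2 * x.1.val : ZMod 4) = b
    decide
  · change ∀ x : ZMod 2 × ZMod 8, (x.2.val + 2 * x.1.val : ZMod 4) = 0 →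
      ∃ k : ZMod 4, (((k.val : ZMod 2), (2 * k.val : ZMod 8)) : ZMod 2 × ZMod 8) = x
    decide

lemma good_pair {i j : ι} (hij : i ≠ j) :
    Good (TwoGrp (Pi.single i 1 + Pi.single j 3 : ι → ℕ)) := by
  set e : ι → ℕ := Pi.single i 1 + Pi.single j 3 with he
  have hei : e i = 1 := by simp [he, hij]
  have hej : e j = 3 := by simp [he, hij.symm]
  have hek : ∀ k, k ≠ i → k ≠ j → e k = 0 := fun k h1 h2 => by simp [he, h1, h2]
  have h8 : ∀ k, k ≠ i → 2 ^ e k ∣ 8 := by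
    intro k h
    by_cases h' : k = j
    · subst h'; simp [hej]
    · simp [hek k h h']
  have h2 : ∀ k, k = i → 2 ^ e k ∣ 2 := by rintro k rfl; simp [hei]
  let φ (k : ι) : ZMod 2 × ZMod 8 →+ ZMod (2 ^ e k) :=
    if h : k = i then (ZMod.castHom (h2 k h) _).toAddMonoidHom.comp (AddMonoidHom.fst _ _)
    else (ZMod.castHom (h8 k h) _).toAddMonoidHom.comp (AddMonoidHom.snd _ _)
  refine good_of_surjective good_two_eight
    (AddMonoidHom.mk' (fun x k => φ k x) fun a b => funext fun k => map_add _ _ _)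
    (fun y => ?_) ?_
  · obtain ⟨a, ha⟩ := ZMod.castHom_surjective (h2 i rfl) (y i)
    obtain ⟨b, hb⟩ := ZMod.castHom_surjective (h8 j hij.symm) (y j)
    refine ⟨(a, b), funext fun k => ?_⟩
    change φ k (a, b) = y k
    by_cases h : k = i
    · subst h; simpa [φ] using ha
    by_cases h' : k = j
    · subst h'; simpa [φ, h] using hb
    have : Subsingleton (ZMod (2 ^ e k)) := by
      rw [hek k h h']
      exact inferInstanceAs (Subsingleton (ZMod 1))
    exact Subsingleton.elim _ _
  · rw [card_twoGrp]
    simp [he, Finset.sum_add_distrib]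

/-- The contribution of a cyclic factor `ℤ/2^k` to the admissibility inequality. -/
def wt (k : ℕ) : ℤ := if k = 1 then -1 else if k % 2 = 1 ∨ 6 ≤ k then 1 else 0

/-- Every exponent vector of even sum and nonnegative total weight is a sum of vectors `2 δᵢ` and
`δᵢ + 3 δⱼ`: a factor `ℤ/2` is paired with a factor of positive weight, and once there is none,
odd exponents are paired arbitrarily. Subtracting `3` turns an exponent of weight `1` into one
of nonnegative weight, and into one of weight `1` if it was even. -/
lemma good_of_wt (N : ℕ) : ∀ e : ι → ℕ, ∑ i, e i = N → Even (∑ i, e i) → 0 ≤ ∑ i, wt (e i) →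
    Good (TwoGrp e) := by
  induction N using Nat.strong_induction_on with
  | _ N ih =>
  intro e hN heven hwt
  have key : ∀ i j, i ≠ j → 1 ≤ e i → 3 ≤ e j →
      (∀ e' : ι → ℕ, e' i = e i - 1 → e' j = e j - 3 → (∀ k, k ≠ i → k ≠ j → e' k = e k) →
        0 ≤ ∑ i, wt (e' i)) → Good (TwoGrp e) := by
    intro i j hij hi hj h
    let d : ι → ℕ := Pi.single i 1 + Pi.single j 3
    have hdi : d i = 1 := by simp [d, hij]
    have hdj : d j = 3 := by simp [d, hij.symm]
    have hdk : ∀ k, k ≠ i → k ≠ j → d k = 0 := fun k h1 h2 => by simp [d, h1, h2]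
    have hle : ∀ k, d k ≤ e k := by
      intro k
      by_cases h1 : k = i
      · subst h1; omega
      by_cases h2 : k = j
      · subst h2; omega
      simp [hdk k h1 h2]
    have hde : d + (e - d) = e := funext fun k => by
      have := hle k
      simp
      omega
    have hsum : ∑ k, (e - d) k + 4 = ∑ k, e k := by
      have : ∑ k, d k = 4 := by simp [d, Finset.sum_add_distrib]
      rw [← this, ← Finset.sum_add_distrib]
      exact Finset.sum_congr rfl fun k _ => by rw [add_comm]; exact congrFun hde k
    rw [← hde]
    refine good_add (good_pair hij) (ih _ ?_ _ rfl ?_ (h _ ?_ ?_ ?_))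
    · omega
    · rw [← hsum] at heven
      exact (Nat.even_add.1 heven).2 (by decide)
    · simp [hdi]
    · simp [hdj]
    · intro k h1 h2; simp [hdk k h1 h2]
  by_cases hall : ∀ i, Even (e i)
  · -- all exponents even
    choose c hc using hall
    have he : e = ∑ i, c i • (Pi.single i 2 : ι → ℕ) := by
      funext k
      simp [Finset.sum_apply, Pi.single_apply, hc k]
      omega
    rw [he]
    refine Finset.sum_induction _ (fun e => Good (TwoGrp e)) (fun _ _ => good_add) good_zero
      fun i _ => ?_
    induction c i with
    | zero => rw [zero_smul]; exact good_zero
    | succ n ihn => rw [succ_nsmul]; exact good_add ihn (good_single i)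
  push Not at hall
  obtain ⟨i, hi⟩ := hall
  rw [Nat.not_even_iff] at hi
  by_cases hone : ∃ i, e i = 1
  · obtain ⟨i, hi⟩ := hone
    obtain ⟨j, hj⟩ : ∃ j, 0 < wt (e j) := by
      by_contra! hneg
      have : ∑ k, wt (e k) < ∑ k : ι, 0 :=
        Finset.sum_lt_sum (fun k _ => hneg k) ⟨i, Finset.mem_univ _, by simp [hi, wt]⟩
      simp at this
      omega
    have hij : i ≠ j := by
      rintro rfl
      simp [hi, wt] at hj
    have hj3 : 3 ≤ e j := by
      unfold wt at hj
      split_ifs at hj <;> omega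
    refine key i j hij hi.ge hj3 fun e' h1 h2 h3 => hwt.trans ?_
    have hrest : ∀ f : ι → ℕ, ∑ k, wt (f k) =
        wt (f i) + (wt (f j) + ∑ k ∈ (Finset.univ.erase i).erase j, wt (f k)) := by
      intro f
      rw [Finset.add_sum_erase _ (fun k => wt (f k)) (by simp [hij.symm]),
        Finset.add_sum_erase _ (fun k => wt (f k)) (Finset.mem_univ i)]
    rw [hrest e, hrest e', h1, h2]
    have h4 : ∑ k ∈ (Finset.univ.erase i).erase j, wt (e' k) =
        ∑ k ∈ (Finset.univ.erase i).erase j, wt (e k) := by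
      refine Finset.sum_congr rfl fun k hk => ?_
      simp only [Finset.mem_erase] at hk
      rw [h3 k hk.2.1 hk.1]
    have h5 : wt (e i) + wt (e j) ≤ wt (e i - 1) + wt (e j - 3) := by
      unfold wt at hj ⊢
      split_ifs at hj ⊢ <;> omega
    omega
  · push Not at hone
    obtain ⟨j, hij, hj⟩ : ∃ j, i ≠ j ∧ e j % 2 = 1 := by
      by_contra! hcon
      rw [← Finset.add_sum_erase _ _ (Finset.mem_univ i), Nat.even_add] at heven
      have : Even (∑ k ∈ Finset.univ.erase i, e k) := by
        refine Finset.even_sum _ fun k hk => ?_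
        rw [Finset.mem_erase] at hk
        have := hcon k hk.1.symm
        rw [Nat.even_iff]
        omega
      rw [← heven, Nat.even_iff] at this
      omega
    have h1 := hone i
    have h2 := hone j
    refine key i j hij (by omega) (by omega) fun e' h1' h2' h3 => Finset.sum_nonneg fun k _ => ?_
    have h4 : e' k ≠ 1 := by
      by_cases hki : k = i
      · subst hki; omega
      by_cases hkj : k = j
      · subst hkj; omega
      rw [h3 k hki hkj]
      exact hone k
    unfold wt
    split_ifs <;> omega

end TwoGrp

lemma good_of_admissible {G : Type*} [AddCommGroup G] [Finite G] (h : IsAdmissibleTwoGroup G)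
    (hsq : ∃ m, Nat.card G = m ^ 2) : Good G := by
  obtain ⟨t, w, v, s, u, r, vv, -, hs, -, -, hr, -, ⟨φ⟩, hv⟩ := h
  let e : ((Σ i : Fin t, Fin (u i)) ⊕ (Σ j : Fin w, Fin (vv j)) ⊕ Fin v) → ℕ :=
    Sum.elim (fun x => 2 * s x.1) (Sum.elim (fun x => 2 * r x.1 + 1) (fun _ => 1))
  let ψ : TwoGrp e →+ ((∀ i : Fin t, Fin (u i) → ZMod (2 ^ (2 * s i))) ×
      (∀ j : Fin w, Fin (vv j) → ZMod (2 ^ (2 * r j + 1))) × (Fin v → ZMod 2)) :=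
    AddMonoidHom.mk' (fun x => (fun i a => x (.inl ⟨i, a⟩), fun j a => x (.inr (.inl ⟨j, a⟩)),
      fun a => x (.inr (.inr a)))) fun _ _ => rfl
  have hψ : Function.Bijective ψ := by
    constructor
    · intro x y hxy
      have h1 := congrArg Prod.fst hxy
      have h2 := congrArg (fun z => z.2.1) hxy
      have h3 := congrArg (fun z => z.2.2) hxy
      funext k
      obtain ⟨i, a⟩ | ⟨j, a⟩ | a := k
      · exact congrFun (congrFun h1 i) a
      · exact congrFun (congrFun h2 j) a
      · exact congrFun h3 a
    · rintro ⟨a, b, c⟩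
      refine ⟨fun k => match k with
        | .inl x => a x.1 x.2
        | .inr (.inl x) => b x.1 x.2
        | .inr (.inr x) => c x, rfl⟩
  let θ : TwoGrp e →+ G := φ.symm.toAddMonoidHom.comp ψ
  have hθ : Function.Bijective θ := φ.symm.bijective.comp hψ
  refine Good.of_bijective (good_of_wt _ e rfl ?_ ?_) θ hθ
  · obtain ⟨m, hm⟩ := hsq
    rw [← Nat.card_congr (Equiv.ofBijective θ hθ), card_twoGrp] at hm
    have := congrArg (fun k => k.factorization 2) hm
    simp only [Nat.factorization_pow, Finsupp.smul_apply, Nat.prime_two.factorization_self,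
      smul_eq_mul, mul_one] at this
    exact this ▸ even_two_mul _
  · have h1 : ∀ i, wt (2 * s i) = if s i ≠ 1 ∧ s i ≠ 2 then 1 else 0 := by
      intro i
      have := hs i
      unfold wt
      split_ifs <;> omega
    have h2 : ∀ j, wt (2 * r j + 1) = 1 := by
      intro j
      have := hr j
      unfold wt
      split_ifs <;> omega
    have h4 : ∀ i : Fin t, ∑ _a : Fin (u i), wt (2 * s i) =
        ((if s i ≠ 1 ∧ s i ≠ 2 then u i else 0 : ℕ) : ℤ) := by
      intro i
      rw [h1, Finset.sum_const, Finset.card_univ, Fintype.card_fin]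
      split_ifs <;> simp
    have h3 : ∑ k, wt (e k) =
        ((∑ i ∈ Finset.univ.filter (fun i : Fin t => s i ≠ 1 ∧ s i ≠ 2), u i : ℕ) : ℤ) +
        ((∑ j, vv j : ℕ) : ℤ) - v := by
      simp only [Fintype.sum_sum_type, e, Sum.elim_inl, Sum.elim_inr, Fintype.sum_sigma, h4, h2]
      rw [Finset.sum_filter]
      simp [wt]
      ring
    rw [h3]
    omega

/-! ### Existence of the limit for every `g` -/

lemma etaMin_pow_add {G : Type*} [AddCommGroup G] [Finite G] {g m : ℕ} (n : ℕ)
    (hg : g ≤ Nat.card G ^ m) :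
    etaMin (Fin (m + n) → G) g ≤ etaMin (Fin m → G) g * etaMin (Fin n → G) 1 := by
  refine etaMin_ext
    (AddMonoidHom.mk' (fun x => Fin.append x 0) fun a b => ?_)
    (AddMonoidHom.mk' (fun x j => x (Fin.natAdd m j)) fun a b => rfl) ?_ ?_ ?_
    (by simpa [Nat.card_fun] using hg)
  · funext k
    refine Fin.addCases (fun j => ?_) (fun j => ?_) k <;> simp
  · intro a b h
    funext j
    simpa using congrFun h (Fin.castAdd n j)
  · intro y
    exact ⟨Fin.append 0 y, funext fun j => by simp⟩
  · intro x hx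
    refine ⟨fun j => x (Fin.castAdd n j), funext fun k => ?_⟩
    refine Fin.addCases (fun j => by simp) (fun j => ?_) k
    simpa using (congrFun hx j).symm

/-- With `a n` the normalised value of `η_g(Gⁿ)`, submultiplicativity gives
`a (m + n) ≤ a m * (1 + o(1))` once `|G|ᵐ ≥ g`, so `a` tends to the infimum of these `a m`. -/
lemma exists_limit {G : Type*} [AddCommGroup G] [Finite G] (hG : Good G) (g : ℕ) (hg : 1 ≤ g) :
    ∃ L : ℝ, Tendsto (fun n : ℕ => (etaMin (Fin n → G) g : ℝ) /
      (√g * (Nat.card G : ℝ) ^ ((n : ℝ) / 2))) atTop (𝓝 L) := by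
  obtain rfl | hg2 := hg.eq_or_lt
  · exact ⟨1, by simpa [Good] using hG⟩
  obtain hc | hc := subsingleton_or_nontrivial G
  · -- no `g`-basis exists, and the infimum of the empty set is `0`
    refine ⟨0, tendsto_const_nhds.congr fun n => ?_⟩
    have h0 : etaMin (Fin n → G) g = 0 := by
      refine Nat.sInf_eq_zero.2 (.inr (Set.eq_empty_of_forall_notMem ?_))
      rintro k ⟨B, -, hB, -⟩
      have h1 := hB 0
      have h2 := Finite.card_le_one_iff_subsingleton.2
        (inferInstance : Subsingleton {p : (Fin n → G) × (Fin n → G) //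
          p.1 ∈ B ∧ p.2 ∈ B ∧ p.1 - p.2 = 0})
      omega
    simp [h0]
  set a : ℕ → ℝ := fun n => (etaMin (Fin n → G) g : ℝ) /
      (√g * (Nat.card G : ℝ) ^ ((n : ℝ) / 2)) with ha
  have hcard : 1 < Nat.card G := Finite.one_lt_card
  have hc0 : (0 : ℝ) < Nat.card G := by exact_mod_cast Nat.card_pos
  have hg0 : (0 : ℝ) < √g := Real.sqrt_pos.2 (by exact_mod_cast hg)
  have hsub : ∀ m, g ≤ m → ∀ n, a (m + n) ≤
      a m * ((etaMin (Fin n → G) 1 : ℝ) / (Nat.card G : ℝ) ^ ((n : ℝ) / 2)) := by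
    intro m hm n
    have h := etaMin_pow_add (G := G) (g := g) (m := m) n
      (hm.trans (Nat.lt_pow_self hcard).le)
    have h' : (etaMin (Fin (m + n) → G) g : ℝ) ≤
        etaMin (Fin m → G) g * etaMin (Fin n → G) 1 := by exact_mod_cast h
    rw [div_mul_div_comm, ha]
    have hpow : (Nat.card G : ℝ) ^ (((m + n : ℕ) : ℝ) / 2) =
        (Nat.card G : ℝ) ^ ((m : ℝ) / 2) * (Nat.card G : ℝ) ^ ((n : ℝ) / 2) := by
      rw [← Real.rpow_add hc0]
      congr 1
      push_cast
      ring
    simp only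
    rw [hpow, ← mul_assoc]
    gcongr
  have ha0 : ∀ n, 0 ≤ a n := fun n => by positivity
  have hbdd : BddBelow (a '' Set.Ici g) := ⟨0, by rintro _ ⟨n, -, rfl⟩; exact ha0 n⟩
  have hne : (a '' Set.Ici g).Nonempty := ⟨a g, g, Set.self_mem_Ici, rfl⟩
  refine ⟨sInf (a '' Set.Ici g), tendsto_order.2 ⟨fun l hl => ?_, fun l hl => ?_⟩⟩
  · filter_upwards [eventually_ge_atTop g] with n hn
    exact hl.trans_le (csInf_le hbdd ⟨n, hn, rfl⟩)
  · obtain ⟨_, ⟨m, hm, rfl⟩, hml⟩ := exists_lt_of_csInf_lt hne hl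
    have hlim := hG.const_mul (a m)
    rw [mul_one] at hlim
    have hev := hlim.eventually_lt_const hml
    have := (tendsto_sub_atTop_nat m).eventually hev
    filter_upwards [this, eventually_ge_atTop m] with n hn hmn
    have h := hsub m hm (n - m)
    rw [Nat.add_sub_cancel' hmn] at h
    exact h.trans_lt hn

/-- For `G = G₂ × H × H` with `G₂` an admissible finite abelian 2-group of square order and `H`
of odd order, `η₁(G^n) = (1 + o(1))|G|^{n/2}`, and for each `g ≥ 1` the limit
`lim_n η_g(G^n)/(√g |G|^{n/2})` exists. -/
theorem stmt7 (G₂ H : Type*) [AddCommGroup G₂] [Fintype G₂] [AddCommGroup H] [Fintype H]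
    (hG₂ : IsAdmissibleTwoGroup G₂) (hsq : ∃ m : ℕ, Fintype.card G₂ = m ^ 2)
    (hH : Odd (Fintype.card H)) :
    Filter.Tendsto (fun n : ℕ => (etaMin (Fin n → G₂ × H × H) 1 : ℝ) /
        (Fintype.card (G₂ × H × H) : ℝ) ^ ((n : ℝ) / 2)) Filter.atTop (nhds 1) ∧
    ∀ g : ℕ, 1 ≤ g →
      ∃ L : ℝ, Filter.Tendsto (fun n : ℕ => (etaMin (Fin n → G₂ × H × H) g : ℝ) /
          (Real.sqrt g * (Fintype.card (G₂ × H × H) : ℝ) ^ ((n : ℝ) / 2)))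
        Filter.atTop (nhds L) := by
  simp only [← Nat.card_eq_fintype_card] at hsq hH ⊢
  have hG : Good (G₂ × H × H) := (good_of_admissible hG₂ hsq).prod (good_prod_self H hH)
  exact ⟨hG, exists_limit hG⟩
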